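/- There exists a function f : [0,1] → ℝ which is Hölder continuous of every exponent α ∈ (0,1) and which does not have the relaxed Sard property, i.e. the pushforward f_#(𝟙_S L¹) is not mutually singular with the Lebesgue measure L¹ on ℝ, where S is the critical set of f. -/

import Mathlib

open MeasureTheory Set

noncomputable section

/-- The critical set of `f : [0,1] → ℝ`: points of `[0,1]` where `f` is either not
differentiable or has zero derivative. -/
def critSet1 (f : ℝ → ℝ) : Set ℝ :=
  {x | x ∈ Set.Icc (0:ℝ) 1 ∧
    (¬ DifferentiableWithinAt ℝ f (Set.Icc (0:ℝ) 1) x ∨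
      derivWithin f (Set.Icc (0:ℝ) 1) x = 0)}

/-- `f` is Hölder continuous of exponent `α` on `[0,1]`. -/
def HolderOnUnit (f : ℝ → ℝ) (α : ℝ) : Prop :=
  ∃ C : ℝ, ∀ x ∈ Set.Icc (0:ℝ) 1, ∀ y ∈ Set.Icc (0:ℝ) 1, |f x - f y| ≤ C * |x - y| ^ α

/-!
Add to the identity a sum `g` of nonnegative triangular spikes: those of level `n` stand at the
points `k / 2ⁿ`, have height `2⁻ⁿ` and slope `Lₙ`, and cover a set of measure at most `2 / Lₙ`.

If `∑ 2 / Lₙ < 1`, then `g` vanishes on a set `K` of positive measure. There `x + g x = x`, so the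
image of `L¹` restricted to `K` is `L¹` restricted to `K`, and it remains to see that `K` is
critical. A point of `K` minimises `g`, so a derivative of `g` there would be zero, while `g` is at
least `2⁻ⁿ` at the nearest `k / 2ⁿ`, within distance `2⁻ⁿ / 2`.

For the Hölder bound, a spike of level `n` has oscillation at most `2⁻ⁿ` and Lipschitz constant
`Lₙ`, hence `α`-Hölder constant at most `2^(-n (1 - α)) Lₙ ^ α`; these constants are summable for
every `α < 1` when `Lₙ` grows polynomially.
-/

open Filter Topology Real
open scoped NNReal ENNReal

theorem holderWith_tsum {ι X E : Type*} [PseudoMetricSpace X] [NormedAddCommGroup E]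
    {C : ι → ℝ≥0} {r : ℝ≥0} {f : ι → X → E} (hf : ∀ i, HolderWith (C i) r (f i))
    (hC : Summable C) (hsum : ∀ x, Summable fun i => f i x) :
    HolderWith (∑' i, C i) r fun x => ∑' i, f i x := by
  intro x y
  have hbound : nndist (∑' i, f i x) (∑' i, f i y) ≤ (∑' i, C i) * nndist x y ^ (r : ℝ) := by
    rw [nndist_eq_nnnorm, ← (hsum x).tsum_sub (hsum y)]
    exact tsum_of_nnnorm_bounded (hC.hasSum.mul_right _) fun i => by
      simpa only [nndist_eq_nnnorm] using (hf i).nndist_le x y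
  rw [edist_nndist, edist_nndist, ← ENNReal.coe_rpow_of_nonneg _ r.coe_nonneg]
  exact_mod_cast hbound

theorem not_differentiableAt_of_isLocalMin_of_frequently_lt {E : Type*} [NormedAddCommGroup E]
    [NormedSpace ℝ E] {g : E → ℝ} {x : E} (hmin : IsLocalMin g x)
    {c : ℝ} (hc : 0 < c) (hfreq : ∃ᶠ y in 𝓝 x, c * ‖y - x‖ < g y - g x) :
    ¬DifferentiableAt ℝ g x := by
  intro hg
  have hlittle := hg.hasFDerivAt.isLittleO
  simp only [hmin.fderiv_eq_zero, zero_apply, sub_zero] at hlittle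
  exact hfreq ((hlittle.bound hc).mono fun y hy => not_lt.2 ((le_abs_self _).trans hy))

theorem not_mutuallySingular_map_restrict_of_eqOn_id {α : Type*} [MeasurableSpace α]
    {μ : Measure α} {f : α → α} {K S : Set α} (hf : AEMeasurable f (μ.restrict S)) (hKS : K ⊆ S)
    (hfK : EqOn f id K) (hK : μ K ≠ 0) :
    ¬(Measure.map f (μ.restrict S)).MutuallySingular μ := by
  rintro ⟨A, hA, hmapA, hAc⟩
  rw [Measure.map_apply_of_aemeasurable hf hA] at hmapA
  have hKA : μ (K ∩ A) = 0 := by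
    have hsub : K ∩ A ⊆ f ⁻¹' A ∩ S := fun x hx =>
      ⟨by simpa only [mem_preimage, hfK hx.1, id] using hx.2, hKS hx.1⟩
    exact measure_mono_null hsub
      (le_bot_iff.1 ((Measure.le_restrict_apply S (f ⁻¹' A)).trans_eq hmapA))
  exact hK (measure_mono_null (fun x hx => (em (x ∈ A)).imp (⟨hx, ·⟩) id)
    (measure_union_null hKA hAc))

theorem abs_round_mul_div_sub_le (x : ℝ) {q : ℝ} (hq : 0 < q) :
    |round (q * x) / q - x| ≤ 1 / 2 / q := by
  rw [div_sub' hq.ne', abs_div, abs_of_pos hq, abs_sub_comm]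
  gcongr
  exact abs_sub_round _

theorem tendsto_round_mul_div_atTop (x : ℝ) :
    Tendsto (fun q : ℝ => round (q * x) / q) atTop (𝓝 x) := by
  refine tendsto_iff_dist_tendsto_zero.2 (squeeze_zero' (.of_forall fun q => dist_nonneg) ?_
    (tendsto_const_nhds (x := (1 / 2 : ℝ)).div_atTop tendsto_id))
  filter_upwards [eventually_gt_atTop 0] with q hq using abs_round_mul_div_sub_le x hq

/-- The `2⁻ⁿ`-periodic train of triangular spikes on the circle `ℝ / ℤ`, of height `2⁻ⁿ` and
slope `L`, centred at the dyadic points `k / 2ⁿ`. -/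
def dyadicSpike (L : ℝ≥0) (n : ℕ) (θ : UnitAddCircle) : ℝ :=
  (1 / 2) ^ n * max 0 (1 - L * ‖2 ^ n • θ‖)

section DyadicSpike

variable (L : ℝ≥0) (n : ℕ) (θ : UnitAddCircle)

theorem dyadicSpike_nonneg : 0 ≤ dyadicSpike L n θ := by
  unfold dyadicSpike
  positivity

theorem dyadicSpike_le : dyadicSpike L n θ ≤ (1 / 2) ^ n :=
  mul_le_of_le_one_right (by positivity) (max_le zero_le_one (sub_le_self 1 (by positivity)))

theorem dyadicSpike_of_smul_eq_zero {n : ℕ} {θ : UnitAddCircle} (hθ : 2 ^ n • θ = 0) :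
    dyadicSpike L n θ = (1 / 2) ^ n := by
  simp [dyadicSpike, hθ]

theorem lipschitzWith_dyadicSpike : LipschitzWith L (dyadicSpike L n) := by
  refine LipschitzWith.of_dist_le_mul fun θ φ => ?_
  calc |dyadicSpike L n θ - dyadicSpike L n φ|
      = (1 / 2) ^ n * |max 0 (1 - L * ‖2 ^ n • θ‖) - max 0 (1 - L * ‖2 ^ n • φ‖)| := by
        rw [dyadicSpike, dyadicSpike, ← mul_sub, abs_mul, abs_of_pos (by positivity)]
    _ ≤ (1 / 2) ^ n * |(1 - L * ‖2 ^ n • θ‖) - (1 - L * ‖2 ^ n • φ‖)| := by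
        rw [max_comm (0 : ℝ), max_comm (0 : ℝ)]
        exact mul_le_mul_of_nonneg_left (abs_max_sub_max_le_abs _ _ _) (by positivity)
    _ = (1 / 2) ^ n * (L * |‖2 ^ n • φ‖ - ‖2 ^ n • θ‖|) := by
        rw [sub_sub_sub_cancel_left, ← mul_sub, abs_mul, NNReal.abs_eq]
    _ ≤ (1 / 2) ^ n * (L * (2 ^ n * ‖φ - θ‖)) := by
        gcongr
        refine (abs_norm_sub_norm_le _ _).trans ?_
        simpa only [← smul_sub, nsmul_eq_mul, Nat.cast_pow, Nat.cast_ofNat] using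
          norm_nsmul_le (n := 2 ^ n) (a := φ - θ)
    _ = L * dist θ φ := by
        rw [dist_comm, dist_eq_norm, mul_left_comm (L : ℝ), ← mul_assoc, ← mul_pow]
        norm_num

theorem holderWith_dyadicSpike {α : ℝ≥0} (hα : α ≤ 1) :
    HolderWith (((1 / 2) ^ n) ^ ((1 - α : ℝ≥0) : ℝ) * L ^ (α : ℝ)) α (dyadicSpike L n) := by
  have hosc : HolderWith ((1 / 2) ^ n) 0 (dyadicSpike L n) := fun θ φ => by
    have hdist : dist (dyadicSpike L n θ) (dyadicSpike L n φ) ≤ (1 / 2) ^ n - 0 :=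
      Real.dist_le_of_mem_Icc ⟨dyadicSpike_nonneg L n θ, dyadicSpike_le L n θ⟩
        ⟨dyadicSpike_nonneg L n φ, dyadicSpike_le L n φ⟩
    simp only [NNReal.coe_zero, ENNReal.rpow_zero, mul_one, edist_nndist, ENNReal.coe_le_coe]
    exact_mod_cast (sub_zero ((1 / 2 : ℝ) ^ n)) ▸ hdist
  simpa using hosc.interpolate (lipschitzWith_dyadicSpike L n).holderWith (tsub_add_cancel_of_le hα)

theorem volume_dyadicSpike_ne_zero_le :
    volume {θ | dyadicSpike L n θ ≠ 0} ≤ 2 / (L : ℝ≥0∞) := by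
  obtain rfl | hL := eq_zero_or_pos L
  · simp only [ENNReal.coe_zero, ENNReal.div_zero two_ne_zero, le_top]
  have hsub : {θ | dyadicSpike L n θ ≠ 0} ⊆
      (2 ^ n • · : UnitAddCircle → UnitAddCircle) ⁻¹' Metric.closedBall 0 (1 / L) := by
    intro θ hθ
    contrapose! hθ
    have hfar : 1 / L < ‖2 ^ n • θ‖ := by
      simpa only [mem_preimage, mem_closedBall_zero_iff, not_le] using hθ
    have hsteep : 1 - L * ‖2 ^ n • θ‖ ≤ 0 :=
      sub_nonpos.2 ((div_lt_iff₀' (by exact_mod_cast hL)).1 hfar).le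
    simp only [mem_ofPred_eq, not_not, dyadicSpike, max_eq_left hsteep, mul_zero]
  have hpres : MeasurePreserving (2 ^ n • · : UnitAddCircle → UnitAddCircle) := by
    simpa only [← natCast_zsmul] using
      Measure.measurePreserving_zsmul (volume : Measure UnitAddCircle)
        (n := ((2 ^ n : ℕ) : ℤ)) (by positivity)
  calc volume {θ | dyadicSpike L n θ ≠ 0}
      ≤ volume (Metric.closedBall (0 : UnitAddCircle) (1 / L)) :=
        (measure_mono hsub).trans_eq
          (hpres.measure_preimage measurableSet_closedBall.nullMeasurableSet)
    _ ≤ ENNReal.ofReal (2 * (1 / L)) := by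
        rw [AddCircle.volume_closedBall]
        exact ENNReal.ofReal_le_ofReal (min_le_right _ _)
    _ = 2 / (L : ℝ≥0∞) := by
        rw [mul_one_div, ENNReal.ofReal_div_of_pos (by positivity), ENNReal.ofReal_ofNat,
          ENNReal.ofReal_coe_nnreal]

end DyadicSpike

/-- The superposition of the dyadic spikes of all levels, the spikes of level `n` having slope
`L n`. -/
def spikeSum (L : ℕ → ℝ≥0) (θ : UnitAddCircle) : ℝ :=
  ∑' n, dyadicSpike (L n) n θ

section SpikeSum

variable (L : ℕ → ℝ≥0)

theorem summable_dyadicSpike (θ : UnitAddCircle) : Summable fun n => dyadicSpike (L n) n θ :=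
  summable_geometric_two.of_nonneg_of_le (fun n => dyadicSpike_nonneg (L n) n θ)
    fun n => dyadicSpike_le (L n) n θ

theorem spikeSum_nonneg (θ : UnitAddCircle) : 0 ≤ spikeSum L θ :=
  tsum_nonneg fun n => dyadicSpike_nonneg (L n) n θ

theorem continuous_spikeSum : Continuous (spikeSum L) :=
  continuous_tsum (fun n => (lipschitzWith_dyadicSpike (L n) n).continuous) summable_geometric_two
    fun n θ => by
      simpa only [Real.norm_of_nonneg (dyadicSpike_nonneg (L n) n θ)] using
        dyadicSpike_le (L n) n θ

theorem measurableSet_spikeSum_eq_zero : MeasurableSet {θ | spikeSum L θ = 0} :=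
  (isClosed_singleton.preimage (continuous_spikeSum L)).measurableSet

theorem holderWith_spikeSum {α : ℝ≥0} (hα : α ≤ 1)
    (hsum : Summable fun n => ((1 / 2) ^ n) ^ ((1 - α : ℝ≥0) : ℝ) * L n ^ (α : ℝ)) :
    HolderWith (∑' n, ((1 / 2) ^ n) ^ ((1 - α : ℝ≥0) : ℝ) * L n ^ (α : ℝ)) α (spikeSum L) :=
  holderWith_tsum (fun n => holderWith_dyadicSpike (L n) n hα) hsum (summable_dyadicSpike L)

theorem le_spikeSum_of_smul_eq_zero {n : ℕ} {θ : UnitAddCircle} (hθ : 2 ^ n • θ = 0) :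
    (1 / 2) ^ n ≤ spikeSum L θ :=
  (dyadicSpike_of_smul_eq_zero (L n) hθ).ge.trans <|
    (summable_dyadicSpike L θ).le_tsum n fun m _ => dyadicSpike_nonneg (L m) m θ

theorem not_differentiableAt_spikeSum {x : ℝ} (hx : spikeSum L x = 0) :
    ¬DifferentiableAt ℝ (fun y : ℝ => spikeSum L y) x := by
  refine not_differentiableAt_of_isLocalMin_of_frequently_lt
    (.of_forall fun y => hx.trans_le (spikeSum_nonneg L y)) one_pos
    (((tendsto_round_mul_div_atTop x).comp
      (tendsto_pow_atTop_atTop_of_one_lt one_lt_two)).frequently (Frequently.of_forall fun n => ?_))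
  set y : ℝ := round (2 ^ n * x) / 2 ^ n with hy
  have hydyadic : 2 ^ n • (y : UnitAddCircle) = 0 := by
    rw [← AddCircle.coe_nsmul, AddCircle.coe_eq_zero_iff]
    exact ⟨round (2 ^ n * x), by simp [hy, mul_div_cancel₀]⟩
  calc 1 * ‖y - x‖ < (1 / 2) ^ n := by
        rw [one_mul]
        refine (abs_round_mul_div_sub_le x (by positivity)).trans_lt ?_
        rw [one_div_pow]
        gcongr
        norm_num
    _ ≤ spikeSum L y - spikeSum L x := by
        rw [hx, sub_zero]
        exact le_spikeSum_of_smul_eq_zero L hydyadic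

theorem volume_spikeSum_eq_zero_ne_zero {L : ℕ → ℝ≥0} (hL : ∑' n, 2 / (L n : ℝ≥0∞) < 1) :
    volume {θ | spikeSum L θ = 0} ≠ 0 := by
  have : IsProbabilityMeasure (volume : Measure UnitAddCircle) := ⟨UnitAddCircle.measure_univ⟩
  have hsub : {θ | spikeSum L θ = 0}ᶜ ⊆ ⋃ n, {θ | dyadicSpike (L n) n θ ≠ 0} := by
    intro θ hθ
    contrapose! hθ
    simp only [mem_iUnion, mem_ofPred_eq, not_exists, not_not] at hθ
    simp [spikeSum, hθ]
  rw [ne_eq, ← prob_compl_eq_one_iff (measurableSet_spikeSum_eq_zero L)]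
  refine ne_of_lt ?_
  calc volume {θ | spikeSum L θ = 0}ᶜ
      ≤ ∑' n, volume {θ | dyadicSpike (L n) n θ ≠ 0} :=
        (measure_mono hsub).trans (measure_iUnion_le _)
    _ ≤ ∑' n, 2 / (L n : ℝ≥0∞) :=
        ENNReal.tsum_le_tsum fun n => volume_dyadicSpike_ne_zero_le (L n) n
    _ < 1 := hL

theorem volume_Ioo_inter_spikeSum_eq_zero_ne_zero {L : ℕ → ℝ≥0}
    (hL : ∑' n, 2 / (L n : ℝ≥0∞) < 1) :
    volume {x ∈ Ioo (0 : ℝ) 1 | spikeSum L x = 0} ≠ 0 := by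
  have hvol : volume {θ | spikeSum L θ = 0} = volume {x ∈ Ioo (0 : ℝ) 1 | spikeSum L x = 0} := by
    rw [← (UnitAddCircle.measurePreserving_mk 0).measure_preimage
        (measurableSet_spikeSum_eq_zero L).nullMeasurableSet, zero_add,
      ← restrict_Ioo_eq_restrict_Ioc, Measure.restrict_apply' measurableSet_Ioo, inter_comm]
    rfl
  exact hvol ▸ volume_spikeSum_eq_zero_ne_zero hL

end SpikeSum

/-- The identity with spikes of slope `L n` added at the dyadic points of level `n`. -/
def spikyIdentity (L : ℕ → ℝ≥0) (x : ℝ) : ℝ :=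
  x + spikeSum L x

section SpikyIdentity

variable {L : ℕ → ℝ≥0}

theorem continuous_spikyIdentity : Continuous (spikyIdentity L) :=
  continuous_id.add ((continuous_spikeSum L).comp (AddCircle.continuous_mk' 1))

theorem holderOnUnit_spikyIdentity {C α : ℝ≥0} (hα : α ≤ 1)
    (hL : HolderWith C α (spikeSum L)) : HolderOnUnit (spikyIdentity L) α := by
  refine ⟨1 + C, fun x hx y hy => ?_⟩
  have hcircle : dist (x : UnitAddCircle) y ≤ |x - y| := by
    rw [dist_eq_norm, ← AddCircle.coe_sub]
    exact QuotientAddGroup.norm_mk_le_norm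
  calc |spikyIdentity L x - spikyIdentity L y|
      = |(x - y) + (spikeSum L x - spikeSum L y)| := by
        rw [spikyIdentity, spikyIdentity, add_sub_add_comm]
    _ ≤ |x - y| + |spikeSum L x - spikeSum L y| := abs_add_le _ _
    _ ≤ |x - y| ^ (α : ℝ) + C * |x - y| ^ (α : ℝ) := by
        gcongr
        · exact Real.self_le_rpow_of_le_one (abs_nonneg _)
            (Real.dist_le_of_mem_Icc_01 hx hy) (by exact_mod_cast hα)
        · exact hL.dist_le_of_le hcircle
    _ = (1 + C) * |x - y| ^ (α : ℝ) := by ring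

theorem mem_critSet1_spikyIdentity {x : ℝ} (hx : x ∈ Ioo (0 : ℝ) 1) (hx0 : spikeSum L x = 0) :
    x ∈ critSet1 (spikyIdentity L) := by
  refine ⟨Ioo_subset_Icc_self hx, .inl fun hdiff => not_differentiableAt_spikeSum L hx0 ?_⟩
  have hdiffAt := hdiff.differentiableAt (Icc_mem_nhds hx.1 hx.2)
  exact (differentiableAt_id.fun_add_iff_right).1 hdiffAt

end SpikyIdentity

/-- A choice of spike slopes large enough for the spikes to be sparse, but subexponential in the
level, so that the spike sum stays Hölder of every exponent below `1`. -/
def quadraticSlope (n : ℕ) : ℝ≥0 := 8 * (n + 1) ^ 2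

theorem one_le_quadraticSlope (n : ℕ) : 1 ≤ quadraticSlope n :=
  one_le_mul (by norm_num) (one_le_pow₀ (by simp))

theorem tsum_two_div_quadraticSlope_lt_one : ∑' n, 2 / (quadraticSlope n : ℝ≥0∞) < 1 := by
  have hzeta : HasSum (fun n : ℕ => 2 / (quadraticSlope n : ℝ)) (1 / 4 * (π ^ 2 / 6)) := by
    convert! ((hasSum_nat_add_iff' 1).2 hasSum_zeta_two).mul_left (1 / 4) using 2
    · simp only [quadraticSlope]
      push_cast
      field_simp
      norm_num
    · simp
  have hpi : 1 / 4 * (π ^ 2 / 6) < 1 := by nlinarith [Real.pi_le_four, Real.pi_pos]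
  calc ∑' n, 2 / (quadraticSlope n : ℝ≥0∞)
      = ∑' n, ENNReal.ofReal (2 / (quadraticSlope n : ℝ)) := by
        congr with n
        rw [ENNReal.ofReal_div_of_pos
            (NNReal.coe_pos.2 (zero_lt_one.trans_le (one_le_quadraticSlope n))),
          ENNReal.ofReal_ofNat, ENNReal.ofReal_coe_nnreal]
    _ = ENNReal.ofReal (1 / 4 * (π ^ 2 / 6)) := by
        rw [← ENNReal.ofReal_tsum_of_nonneg (fun n => by positivity) hzeta.summable, hzeta.tsum_eq]
    _ < 1 := ENNReal.ofReal_lt_one.2 hpi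

theorem summable_quadraticSlope_mul_pow {r : ℝ≥0} (hr : r < 1) :
    Summable fun n => quadraticSlope n * r ^ n := by
  have hmonomial : ∀ k : ℕ, Summable fun n : ℕ => (n : ℝ) ^ k * (r : ℝ) ^ n := fun k =>
    summable_pow_mul_geometric_of_norm_lt_one k (by simpa using hr)
  rw [← NNReal.summable_coe]
  refine (((hmonomial 2).mul_left 8).add (((hmonomial 1).mul_left 16).add
    ((hmonomial 0).mul_left 8))).congr fun n => ?_
  simp only [quadraticSlope]
  push_cast
  ring

theorem summable_quadraticSlope_rpow {α : ℝ≥0} (hα : α < 1) :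
    Summable fun n =>
      (((1 / 2) ^ n) ^ ((1 - α : ℝ≥0) : ℝ) * quadraticSlope n ^ (α : ℝ) : ℝ≥0) := by
  have hr : (1 / 2 : ℝ≥0) ^ ((1 - α : ℝ≥0) : ℝ) < 1 :=
    NNReal.rpow_lt_one (by norm_num) (by exact_mod_cast tsub_pos_of_lt hα)
  refine NNReal.summable_of_le (fun n => ?_) (summable_quadraticSlope_mul_pow hr)
  rw [mul_comm (quadraticSlope n), ← NNReal.rpow_natCast, ← NNReal.rpow_natCast, ← NNReal.rpow_mul,
    ← NNReal.rpow_mul, mul_comm (n : ℝ)]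
  gcongr
  simpa only [NNReal.rpow_one] using
    NNReal.rpow_le_rpow_of_exponent_le (one_le_quadraticSlope n) (NNReal.coe_le_one.2 hα.le)

/-- There exists `f : [0,1] → ℝ` Hölder continuous of every exponent `α ∈ (0,1)` which does
not have the relaxed Sard property: `f_#(𝟙_S L¹)` is not mutually singular with `L¹`. -/
theorem exists_holder_not_relaxedSard :
    ∃ f : ℝ → ℝ,
      (∀ α ∈ Set.Ioo (0:ℝ) 1, HolderOnUnit f α) ∧
      ¬ (Measure.map f (volume.restrict (critSet1 f))).MutuallySingular volume := by
  refine ⟨spikyIdentity quadraticSlope, fun α hα => ?_, ?_⟩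
  · lift α to ℝ≥0 using hα.1.le
    have hα1 : α < 1 := by exact_mod_cast hα.2
    exact holderOnUnit_spikyIdentity hα1.le
      (holderWith_spikeSum quadraticSlope hα1.le (summable_quadraticSlope_rpow hα1))
  · exact not_mutuallySingular_map_restrict_of_eqOn_id
      (K := {x ∈ Ioo (0 : ℝ) 1 | spikeSum quadraticSlope x = 0})
      continuous_spikyIdentity.aemeasurable
      (fun x hx => mem_critSet1_spikyIdentity hx.1 hx.2)
      (fun x hx => by simp [spikyIdentity, hx.2])
      (volume_Ioo_inter_spikeSum_eq_zero_ne_zero tsum_two_div_quadraticSlope_lt_one)
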